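/- If A is an n-by-n complex matrix which is unitarily similar to −A, then d(A) ≥ ⌈n/2⌉. Moreover, in this case, d(A) = ⌈n/2⌉ if and only if dim ker(Re(e^{−iθ₀}A)) ≤ 1 for some real θ₀. -/

import Mathlib

open Matrix Polynomial

noncomputable def zdi {m : Type*} [Fintype m] (A : Matrix m m ℂ) : ℕ :=
  sSup {k : ℕ | ∃ V : Matrix m (Fin k) ℂ, Vᴴ * V = 1 ∧ Vᴴ * A * V = 0}

noncomputable def matRe {m : Type*} (A : Matrix m m ℂ) : Matrix m m ℂ :=
  (2⁻¹ : ℂ) • (A + Aᴴ)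

noncomputable def iNonneg {m : Type*} [Fintype m] [DecidableEq m] (M : Matrix m m ℂ) : ℕ :=
  if hM : M.IsHermitian then (Finset.univ.filter fun i => 0 ≤ hM.eigenvalues i).card else 0

def numRange {m : Type*} [Fintype m] (A : Matrix m m ℂ) : Set ℂ :=
  {z | ∃ x : m → ℂ, star x ⬝ᵥ x = 1 ∧ star x ⬝ᵥ A.mulVec x = z}

noncomputable def arg2pi (z : ℂ) : ℝ :=
  if 0 ≤ Complex.arg z then Complex.arg z else Complex.arg z + 2 * Real.pi

def UnitSim {m : Type*} [Fintype m] [DecidableEq m] (A B : Matrix m m ℂ) : Prop :=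
  ∃ U ∈ Matrix.unitaryGroup m ℂ, Uᴴ * A * U = B

def UnitSimG {m l : Type*} [Fintype m] [DecidableEq m] [Fintype l] [DecidableEq l]
    (A : Matrix m m ℂ) (B : Matrix l l ℂ) : Prop :=
  ∃ e : m ≃ l, UnitSim (Matrix.reindex e e A) B

def superMat (n : ℕ) (w : ℕ → ℂ) : Matrix (Fin n) (Fin n) ℂ :=
  Matrix.of fun i j => if (j : ℕ) = (i : ℕ) + 1 then w (i : ℕ) else 0

def cycMat (n : ℕ) (w : ℕ → ℂ) : Matrix (Fin n) (Fin n) ℂ :=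
  Matrix.of fun i j => if (j : ℕ) = ((i : ℕ) + 1) % n then w (i : ℕ) else 0

section ZdiAux

variable {E : Type*} [NormedAddCommGroup E] [InnerProductSpace ℂ E] [FiniteDimensional ℂ E]

/-- The half plane used to split the spectrum of the unitary. -/
def zHalf (μ : ℂ) : Prop := 0 < μ.re ∨ (μ.re = 0 ∧ 0 < μ.im)


theorem zHalf_or (μ : ℂ) (h : μ ≠ 0) : zHalf μ ∨ zHalf (-μ) := by
  unfold zHalf
  simp only [Complex.neg_re, Complex.neg_im]
  by_contra! hc
  apply h
  obtain ⟨⟨h1, h2⟩, h3, h4⟩ := hc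
  have hre : μ.re = 0 := by linarith
  have := h2 hre
  have := h4 (by linarith)
  exact Complex.ext hre (by simp; linarith)

theorem zHalf_neg {μ : ℂ} (h : zHalf μ) : ¬ zHalf (-μ) := by
  unfold zHalf at *
  simp only [Complex.neg_re, Complex.neg_im]
  rintro (h1 | h1) <;> rcases h with h | h
  · linarith
  · linarith [h.1]
  · linarith [h1.1]
  · linarith [h.2, h1.2]

theorem eigen_ortho {E : Type*} [NormedAddCommGroup E] [InnerProductSpace ℂ E] (U : E →ₗ[ℂ] E) (hU : ∀ x y, inner ℂ (U x) (U y) = inner ℂ x y)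
    {μ ν : ℂ} (hne : μ ≠ ν) {x y : E} (hx : U x = μ • x) (hy : U y = ν • y) :
    inner ℂ x y = 0 := by
  by_cases hx0 : x = 0
  · simp [hx0]
  have h1 : (starRingEnd ℂ) μ * μ = 1 := by
    have := hU x x
    rw [hx, inner_smul_left, inner_smul_right, ← mul_assoc] at this
    exact (mul_eq_right₀ (inner_self_ne_zero.2 hx0)).1 this
  have h2 := hU x y
  rw [hx, hy, inner_smul_left, inner_smul_right, ← mul_assoc] at h2
  by_contra h0
  have h3 : (starRingEnd ℂ) μ * ν = 1 := (mul_eq_right₀ h0).1 h2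
  have hm : (starRingEnd ℂ) μ ≠ 0 := left_ne_zero_of_mul_eq_one h1
  exact hne (mul_left_cancel₀ hm (h1.trans h3.symm))

theorem exists_split (T U : E →ₗ[ℂ] E) (hU : ∀ x y, inner ℂ (U x) (U y) = inner ℂ x y)
    (hTU : ∀ x, T (U x) = - U (T x)) :
    ∃ P : Submodule ℂ E, (∀ x ∈ P, T x ∈ Pᗮ) ∧ (∀ x ∈ Pᗮ, T x ∈ P) := by
  let P : Submodule ℂ E := Submodule.span ℂ {x | ∃ μ, zHalf μ ∧ U x = μ • x}
  let Q : Submodule ℂ E := Submodule.span ℂ {x | ∃ μ, zHalf (-μ) ∧ U x = μ • x}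
  have hPQ : P ⟂ Q := by
    refine Submodule.isOrtho_span.2 ?_
    rintro x ⟨μ, hμ, hx⟩ y ⟨ν, hν, hy⟩
    refine eigen_ortho U hU ?_ hx hy
    rintro rfl
    exact zHalf_neg hμ hν
  have hinj : ∀ x, U x = 0 → x = 0 := by
    intro x hx
    have := hU x x
    rw [hx, inner_zero_left] at this
    exact inner_self_eq_zero.1 this.symm
  have heig : ∀ (μ : ℂ) (x : E), U x = μ • x → x ∈ P ⊔ Q := by
    intro μ x hx
    by_cases h0 : μ = 0
    · rw [hinj x (by rw [hx, h0, zero_smul])]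
      exact zero_mem _
    · rcases zHalf_or μ h0 with h | h
      · exact Submodule.mem_sup_left (Submodule.subset_span ⟨μ, h, hx⟩)
      · exact Submodule.mem_sup_right (Submodule.subset_span ⟨μ, h, hx⟩)
  have hmapP : ∀ x ∈ P, U x ∈ P := by
    intro x hx
    induction hx using Submodule.span_induction with
    | mem x h =>
      obtain ⟨μ, h, hx⟩ := h
      rw [hx]
      exact P.smul_mem _ (Submodule.subset_span ⟨μ, h, hx⟩)
    | zero => simp
    | add x y _ _ hx hy => rw [map_add]; exact add_mem hx hy
    | smul a x _ hx => rw [map_smul]; exact P.smul_mem _ hx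
  have hmapQ : ∀ x ∈ Q, U x ∈ Q := by
    intro x hx
    induction hx using Submodule.span_induction with
    | mem x h =>
      obtain ⟨μ, h, hx⟩ := h
      rw [hx]
      exact Q.smul_mem _ (Submodule.subset_span ⟨μ, h, hx⟩)
    | zero => simp
    | add x y _ _ hx hy => rw [map_add]; exact add_mem hx hy
    | smul a x _ hx => rw [map_smul]; exact Q.smul_mem _ hx
  have hmap : ∀ x ∈ P ⊔ Q, U x ∈ P ⊔ Q := by
    intro x hx
    obtain ⟨a, ha, b, hb, rfl⟩ := Submodule.mem_sup.1 hx
    rw [map_add]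
    exact Submodule.add_mem_sup (hmapP a ha) (hmapQ b hb)
  have hUinj : Function.Injective U := (injective_iff_map_eq_zero U).2 hinj
  -- U maps P ⊔ Q onto itself
  have hsurj : ∀ x ∈ P ⊔ Q, ∃ y ∈ P ⊔ Q, U y = x := by
    have h1 : Function.Injective (U.restrict hmap) := by
      intro a b hab
      apply Subtype.ext
      apply hUinj
      exact congrArg Subtype.val hab
    have h2 := LinearMap.injective_iff_surjective.1 h1
    intro x hx
    obtain ⟨y, hy⟩ := h2 ⟨x, hx⟩
    exact ⟨y, y.2, congrArg Subtype.val hy⟩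
  have hmapR : ∀ x ∈ (P ⊔ Q)ᗮ, U x ∈ (P ⊔ Q)ᗮ := by
    intro x hx
    rw [Submodule.mem_orthogonal] at *
    intro u hu
    obtain ⟨y, hy, rfl⟩ := hsurj u hu
    rw [hU]
    exact hx y hy
  have htop : (P ⊔ Q)ᗮ = ⊥ := by
    by_contra hne
    haveI : Nontrivial ((P ⊔ Q)ᗮ : Submodule ℂ E) := Submodule.nontrivial_iff_ne_bot.2 hne
    obtain ⟨μ, hμ⟩ := Module.End.exists_eigenvalue (U.restrict hmapR)
    obtain ⟨v, hv⟩ := hμ.exists_hasEigenvector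
    have h1 : U v = μ • (v : E) := congrArg Subtype.val hv.apply_eq_smul
    have h2 := heig μ v h1
    have h3 : (v : E) = 0 := by
      have := (Submodule.mem_orthogonal _ _).1 v.2 v h2
      exact inner_self_eq_zero.1 this
    exact hv.2 (Subtype.ext h3)
  have htop' : P ⊔ Q = ⊤ := (Submodule.orthogonal_eq_bot_iff).1 htop
  have hQ : Pᗮ = Q := by
    apply le_antisymm
    · intro x hx
      have : x ∈ P ⊔ Q := htop' ▸ Submodule.mem_top
      obtain ⟨a, ha, b, hb, rfl⟩ := Submodule.mem_sup.1 this
      have hb' : b ∈ Pᗮ := hPQ.symm hb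
      have ha' : a ∈ Pᗮ := by simpa using sub_mem hx hb'
      have : a = 0 := inner_self_eq_zero.1 ((Submodule.mem_orthogonal _ _).1 ha' a ha)
      rw [this, zero_add]; exact hb
    · exact hPQ.symm
  refine ⟨P, ?_, ?_⟩
  · rw [hQ]
    intro x hx
    induction hx using Submodule.span_induction with
    | mem x h =>
      obtain ⟨μ, h, hx⟩ := h
      refine Submodule.subset_span ⟨-μ, by simpa using h, ?_⟩
      have := hTU x
      rw [hx, map_smul] at this
      rw [neg_smul, this, neg_neg]
    | zero => simp
    | add x y _ _ hx hy => rw [map_add]; exact add_mem hx hy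
    | smul a x _ hx => rw [map_smul]; exact Q.smul_mem _ hx
  · rw [hQ]
    intro x hx
    induction hx using Submodule.span_induction with
    | mem x h =>
      obtain ⟨μ, h, hx⟩ := h
      refine Submodule.subset_span ⟨-μ, h, ?_⟩
      have := hTU x
      rw [hx, map_smul] at this
      rw [neg_smul, this, neg_neg]
    | zero => simp
    | add x y _ _ hx hy => rw [map_add]; exact add_mem hx hy
    | smul a x _ hx => rw [map_smul]; exact P.smul_mem _ hx

/-- A totally isotropic subspace. -/
def Isot (T : E →ₗ[ℂ] E) (S : Submodule ℂ E) : Prop := ∀ x ∈ S, ∀ y ∈ S, inner ℂ x (T y) = 0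

/-- pencil lemma -/
theorem pencil (T D : E →ₗ[ℂ] E) (Q : Submodule ℂ E)
    (h : ∀ θ : ℝ, ∃ b ∈ Q, b ≠ 0 ∧ T b = Complex.exp (θ * Complex.I) • D b) :
    ∃ S ≤ Q, (∀ x ∈ S, T x ∈ S.map D) ∧
      Module.finrank ℂ (S.map D) < Module.finrank ℂ S := by
  let S : Submodule ℂ E :=
    Submodule.span ℂ {b | b ∈ Q ∧ ∃ θ : ℝ, T b = Complex.exp (θ * Complex.I) • D b}
  have hT : ∀ x ∈ S, T x ∈ S.map D := by
    intro x hx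
    induction hx using Submodule.span_induction with
    | mem x h =>
      obtain ⟨h, θ, hx⟩ := h
      rw [hx]
      exact Submodule.smul_mem _ _
        (Submodule.mem_map_of_mem (Submodule.subset_span ⟨h, θ, hx⟩))
    | zero => simp
    | add x y _ _ hx hy => rw [map_add]; exact add_mem hx hy
    | smul a x _ hx => rw [map_smul]; exact Submodule.smul_mem _ _ hx
  refine ⟨S, Submodule.span_le.2 (fun b hb => hb.1), hT, ?_⟩
  by_contra hlt
  have hle : Module.finrank ℂ (S.map D) ≤ Module.finrank ℂ S := Submodule.finrank_map_le D S
  have heq : Module.finrank ℂ S = Module.finrank ℂ (S.map D) := by omega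
  let D' : S →ₗ[ℂ] S.map D := D.restrict (fun x hx => Submodule.mem_map_of_mem hx)
  have hsur : Function.Surjective D' := by
    rintro ⟨y, x, hx, rfl⟩
    exact ⟨⟨x, hx⟩, rfl⟩
  have hinj : Function.Injective D' :=
    (LinearMap.injective_iff_surjective_of_finrank_eq_finrank heq).2 hsur
  let e : S ≃ₗ[ℂ] S.map D := LinearEquiv.ofBijective D' ⟨hinj, hsur⟩
  let T' : S →ₗ[ℂ] S.map D := T.restrict hT
  let R : Module.End ℂ S := e.symm.toLinearMap ∘ₗ T'
  have hev : ∀ θ : ℝ, R.HasEigenvalue (Complex.exp (θ * Complex.I)) := by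
    intro θ
    obtain ⟨b, hb, hb0, hTb⟩ := h θ
    refine Module.End.hasEigenvalue_of_hasEigenvector
      (x := (⟨b, Submodule.subset_span ⟨hb, θ, hTb⟩⟩ : S)) ⟨?_, ?_⟩
    · rw [Module.End.mem_eigenspace_iff]
      change e.symm (T' _) = _
      rw [LinearEquiv.symm_apply_eq]
      rw [map_smul]
      exact Subtype.ext hTb
    · intro h0
      exact hb0 (congrArg Subtype.val h0)
  have hfin : (Set.range fun θ : Set.Ioc (-Real.pi) Real.pi =>
      Complex.exp ((θ : ℝ) * Complex.I)).Finite := by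
    refine (Module.End.finite_hasEigenvalue R).subset ?_
    rintro _ ⟨θ, rfl⟩
    exact hev θ
  have hinf : (Set.range fun θ : Set.Ioc (-Real.pi) Real.pi =>
      Complex.exp ((θ : ℝ) * Complex.I)).Infinite := by
    have : Infinite (Set.Ioc (-Real.pi) Real.pi) :=
      (Set.Ioc_infinite (by linarith [Real.pi_pos])).to_subtype
    refine Set.infinite_range_of_injective ?_
    intro a b hab
    have h1 := Complex.arg_exp_mul_I
    have h2 := congrArg Complex.arg hab
    simp only [Complex.arg_exp_mul_I] at h2
    have ha : (toIocMod Real.two_pi_pos (-Real.pi)) (a : ℝ) = a :=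
      (toIocMod_eq_self _).2 ⟨a.2.1, by linarith [a.2.2]⟩
    have hb : (toIocMod Real.two_pi_pos (-Real.pi)) (b : ℝ) = b :=
      (toIocMod_eq_self _).2 ⟨b.2.1, by linarith [b.2.2]⟩
    exact Subtype.ext (by rw [← ha, ← hb, h2])
  exact hinf hfin

/-- rotated real part (times two) -/
noncomputable def rotRe (T : E →ₗ[ℂ] E) (c : ℂ) : E →ₗ[ℂ] E :=
  c • T + (starRingEnd ℂ c) • LinearMap.adjoint T

theorem rotRe_symm (T : E →ₗ[ℂ] E) (c : ℂ) (x y : E) :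
    inner ℂ (rotRe T c x) y = inner ℂ x (rotRe T c y) := by
  simp only [rotRe, LinearMap.add_apply, LinearMap.smul_apply, inner_add_left, inner_add_right,
    inner_smul_left, inner_smul_right, LinearMap.adjoint_inner_left, LinearMap.adjoint_inner_right]
  simp
  ring

theorem adj_maps (T : E →ₗ[ℂ] E) {P Q : Submodule ℂ E} (h : ∀ x ∈ P, T x ∈ Qᗮ) :
    ∀ x ∈ Q, LinearMap.adjoint T x ∈ Pᗮ := by
  intro x hx
  rw [Submodule.mem_orthogonal]
  intro u hu
  rw [LinearMap.adjoint_inner_right]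
  exact Submodule.inner_left_of_mem_orthogonal hx (h u hu)

theorem isot_bound (T : E →ₗ[ℂ] E) (c : ℂ) (S : Submodule ℂ E) (hS : Isot T S) :
    2 * Module.finrank ℂ S ≤
      Module.finrank ℂ E + Module.finrank ℂ (LinearMap.ker (rotRe T c)) := by
  set G := rotRe T c with hG
  have h1 : S.map G ≤ Sᗮ := by
    rintro _ ⟨x, hx, rfl⟩
    rw [Submodule.mem_orthogonal]
    intro u hu
    simp only [hG, rotRe, LinearMap.add_apply, LinearMap.smul_apply, inner_add_right,
      inner_smul_right, LinearMap.adjoint_inner_right]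
    rw [hS u hu x hx, ← inner_conj_symm, hS x hx u hu]
    simp
  have h2 := Submodule.finrank_mono h1
  have h3 := Submodule.finrank_add_finrank_orthogonal S
  have h4 := LinearMap.finrank_range_add_finrank_ker (G.domRestrict S)
  have h5 : LinearMap.range (G.domRestrict S) = S.map G := LinearMap.range_domRestrict _ _
  rw [h5] at h4
  have h6 : Module.finrank ℂ (LinearMap.ker (G.domRestrict S)) ≤
      Module.finrank ℂ (LinearMap.ker G) := by
    rw [← Submodule.finrank_map_subtype_eq S]
    refine Submodule.finrank_mono ?_
    rintro _ ⟨x, hx, rfl⟩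
    exact hx
  omega

theorem core (T : E →ₗ[ℂ] E) (P : Submodule ℂ E) (hP : ∀ x ∈ P, T x ∈ Pᗮ)
    (hQ : ∀ x ∈ Pᗮ, T x ∈ P)
    (hle : Module.finrank ℂ (Pᗮ : Submodule ℂ E) ≤ Module.finrank ℂ P)
    (hle' : Module.finrank ℂ P ≤ Module.finrank ℂ (Pᗮ : Submodule ℂ E) + 1)
    (hker : ∀ θ : ℝ,
      2 ≤ Module.finrank ℂ (LinearMap.ker (rotRe T (Complex.exp (-(θ : ℂ) * Complex.I))))) :
    ∃ M : Submodule ℂ E, Isot T M ∧ Module.finrank ℂ P + 1 ≤ Module.finrank ℂ M := by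
  have hPP : Pᗮᗮ = P := Submodule.orthogonal_orthogonal P
  have hPa : ∀ x ∈ P, LinearMap.adjoint T x ∈ Pᗮ := adj_maps T hP
  have hQa : ∀ x ∈ Pᗮ, LinearMap.adjoint T x ∈ P := by
    intro x hx
    have := adj_maps T (P := Pᗮ) (Q := Pᗮ) (by rwa [hPP]) x hx
    rwa [hPP] at this
  have key : ∀ c : ℂ, 2 ≤ Module.finrank ℂ (LinearMap.ker (rotRe T c)) →
      ∃ b ∈ Pᗮ, b ≠ 0 ∧ rotRe T c b = 0 := by
    intro c hc
    by_contra! hno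
    set G := rotRe T c with hG
    have hGP : ∀ x ∈ P, G x ∈ Pᗮ := fun x hx =>
      add_mem (Submodule.smul_mem _ _ (hP x hx)) (Submodule.smul_mem _ _ (hPa x hx))
    have hGQ : ∀ x ∈ Pᗮ, G x ∈ P := fun x hx =>
      add_mem (Submodule.smul_mem _ _ (hQ x hx)) (Submodule.smul_mem _ _ (hQa x hx))
    have hkerP : LinearMap.ker G ≤ P := by
      intro x hx
      have : x ∈ P ⊔ Pᗮ := by rw [Submodule.sup_orthogonal_of_hasOrthogonalProjection]; trivial
      obtain ⟨a, ha, b, hb, rfl⟩ := Submodule.mem_sup.1 this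
      rw [LinearMap.mem_ker, map_add] at hx
      have h1 : G b ∈ Pᗮ := by
        rw [eq_neg_of_add_eq_zero_right hx]; exact neg_mem (hGP a ha)
      have h2 : G b = 0 :=
        inner_self_eq_zero.1 ((Submodule.mem_orthogonal _ _).1 h1 _ (hGQ b hb))
      have h3 : b = 0 := by
        by_contra hb0
        exact hno b hb hb0 h2
      rw [h3, add_zero]; exact ha
    have hGQle : Submodule.map G Pᗮ ≤ P := by
      rintro _ ⟨x, hx, rfl⟩
      exact hGQ x hx
    have hkero : LinearMap.ker G ≤ (Submodule.map G Pᗮ)ᗮ ⊓ P := by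
      refine le_inf ?_ hkerP
      intro x hx
      rw [Submodule.mem_orthogonal]
      rintro _ ⟨y, hy, rfl⟩
      rw [rotRe_symm, ← hG, LinearMap.mem_ker.1 hx, inner_zero_right]
    have h1 := Submodule.finrank_mono hkero
    have h2 := Submodule.finrank_add_inf_finrank_orthogonal hGQle
    have h3 : Module.finrank ℂ (Submodule.map G Pᗮ) = Module.finrank ℂ (Pᗮ : Submodule ℂ E) := by
      have hi : Function.Injective (G.domRestrict Pᗮ) := by
        refine (injective_iff_map_eq_zero _).2 ?_
        intro b hb
        by_contra hb0
        exact hno b b.2 (fun h => hb0 (Subtype.ext h)) hb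
      rw [← LinearMap.range_domRestrict]
      exact LinearMap.finrank_range_of_inj hi
    omega
  obtain ⟨S, hSQ, hTS, hlt⟩ := pencil T (LinearMap.adjoint T) Pᗮ (by
    intro θ
    obtain ⟨b, hb, hb0, hGb⟩ := key _ (hker ((θ - Real.pi) / 2))
    refine ⟨b, hb, hb0, ?_⟩
    set c := Complex.exp (-(((θ - Real.pi) / 2 : ℝ) : ℂ) * Complex.I) with hc
    have hcc : starRingEnd ℂ c = - (c * Complex.exp (θ * Complex.I)) := by
      rw [hc, ← Complex.exp_conj, ← Complex.exp_add]
      have : -(((θ - Real.pi) / 2 : ℝ) : ℂ) * Complex.I + θ * Complex.I =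
         (((θ - Real.pi) / 2 : ℝ) : ℂ) * Complex.I + Real.pi * Complex.I := by
        push_cast; ring
      rw [this, Complex.exp_add, Complex.exp_pi_mul_I, map_mul, map_neg, Complex.conj_ofReal, Complex.conj_I,
        neg_mul_neg, mul_neg_one, neg_neg]
    have hc0 : c ≠ 0 := Complex.exp_ne_zero _
    have h1 : c • (T b - Complex.exp (θ * Complex.I) • LinearMap.adjoint T b) = 0 := by
      rw [← hGb]
      simp only [rotRe, LinearMap.add_apply, LinearMap.smul_apply, hcc]
      rw [smul_sub, smul_smul, neg_smul, sub_eq_add_neg]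
    exact sub_eq_zero.1 ((smul_eq_zero.1 h1).resolve_left hc0))
  set D := S.map (LinearMap.adjoint T) with hD
  have hDP : D ≤ P := by
    rintro _ ⟨x, hx, rfl⟩
    exact hQa x (hSQ hx)
  refine ⟨S ⊔ (Dᗮ ⊓ P), ?_, ?_⟩
  · intro x hx y hy
    obtain ⟨s, hs, w, hw, rfl⟩ := Submodule.mem_sup.1 hx
    obtain ⟨s', hs', w', hw', rfl⟩ := Submodule.mem_sup.1 hy
    rw [map_add, inner_add_left, inner_add_right, inner_add_right]
    have e1 : inner ℂ s (T s') = 0 :=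
      Submodule.inner_left_of_mem_orthogonal (hDP (hTS s' hs')) (hSQ hs)
    have e2 : inner ℂ s (T w') = 0 := by
      rw [← LinearMap.adjoint_inner_left]
      exact Submodule.inner_right_of_mem_orthogonal (Submodule.mem_map_of_mem hs) hw'.1
    have e3 : inner ℂ w (T s') = 0 :=
      Submodule.inner_left_of_mem_orthogonal (hTS s' hs') hw.1
    have e4 : inner ℂ w (T w') = 0 :=
      Submodule.inner_right_of_mem_orthogonal hw.2 (hP w' hw'.2)
    rw [e1, e2, e3, e4]; simp
  · have h1 := Submodule.finrank_add_inf_finrank_orthogonal hDP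
    have h2 := Submodule.finrank_sup_add_finrank_inf_eq S (Dᗮ ⊓ P)
    have h3 : S ⊓ (Dᗮ ⊓ P) = ⊥ := by
      rw [eq_bot_iff]
      intro x hx
      exact inner_self_eq_zero.1 (Submodule.inner_right_of_mem_orthogonal hx.2.2 (hSQ hx.1))
    rw [h3, finrank_bot] at h2
    omega

end ZdiAux

section ZdiMat

variable {n : ℕ}

theorem zdi_inner (A : Matrix (Fin n) (Fin n) ℂ) {k : ℕ} (V : Matrix (Fin n) (Fin k) ℂ)
    (a b : EuclideanSpace ℂ (Fin k)) :
    inner ℂ (toEuclideanLin V a) (toEuclideanLin A (toEuclideanLin V b)) =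
      inner ℂ a (toEuclideanLin (Vᴴ * A * V) b) := by
  rw [Matrix.toLpLin_mul 2 2 2, Matrix.toLpLin_mul 2 2 2, LinearMap.comp_apply,
    LinearMap.comp_apply]
  have h1 : (toEuclideanLin Vᴴ) = LinearMap.adjoint (toEuclideanLin V) :=
    Matrix.toEuclideanLin_conjTranspose_eq_adjoint V
  rw [h1, LinearMap.adjoint_inner_right]

theorem zdi_mem_iso (A : Matrix (Fin n) (Fin n) ℂ) {k : ℕ}
    (hk : ∃ V : Matrix (Fin n) (Fin k) ℂ, Vᴴ * V = 1 ∧ Vᴴ * A * V = 0) :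
    ∃ S : Submodule ℂ (EuclideanSpace ℂ (Fin n)),
      Isot (toEuclideanLin A) S ∧ Module.finrank ℂ S = k := by
  obtain ⟨V, hV, hA⟩ := hk
  refine ⟨LinearMap.range (toEuclideanLin V), ?_, ?_⟩
  · rintro _ ⟨a, rfl⟩ _ ⟨b, rfl⟩
    rw [zdi_inner, hA]
    simp
  · have hinj : Function.Injective (toEuclideanLin V) := by
      have h1 : (toEuclideanLin Vᴴ) ∘ₗ (toEuclideanLin V) = LinearMap.id := by
        rw [← Matrix.toLpLin_mul, hV, Matrix.toLpLin_one]
      exact Function.LeftInverse.injective (g := toEuclideanLin Vᴴ)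
        (fun x => LinearMap.congr_fun h1 x)
    rw [LinearMap.finrank_range_of_inj hinj]
    simp

theorem zdi_bdd (A : Matrix (Fin n) (Fin n) ℂ) :
    BddAbove {k : ℕ | ∃ V : Matrix (Fin n) (Fin k) ℂ, Vᴴ * V = 1 ∧ Vᴴ * A * V = 0} := by
  refine ⟨n, ?_⟩
  intro k hk
  obtain ⟨S, _, hS⟩ := zdi_mem_iso A hk
  rw [← hS]
  simpa using Submodule.finrank_le S

theorem zdi_exists (A : Matrix (Fin n) (Fin n) ℂ) :
    ∃ S : Submodule ℂ (EuclideanSpace ℂ (Fin n)),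
      Isot (toEuclideanLin A) S ∧ Module.finrank ℂ S = zdi A := by
  refine zdi_mem_iso A ?_
  exact Nat.sSup_mem (s := {k : ℕ | ∃ V : Matrix (Fin n) (Fin k) ℂ,
    Vᴴ * V = 1 ∧ Vᴴ * A * V = 0}) ⟨0, 0, by ext i; exact i.elim0, by ext i; exact i.elim0⟩ (zdi_bdd A)

theorem le_zdi (A : Matrix (Fin n) (Fin n) ℂ) (S : Submodule ℂ (EuclideanSpace ℂ (Fin n)))
    (hS : Isot (toEuclideanLin A) S) : Module.finrank ℂ S ≤ zdi A := by
  refine le_csSup (zdi_bdd A) ?_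
  let b := stdOrthonormalBasis ℂ S
  let V : Matrix (Fin n) (Fin (Module.finrank ℂ S)) ℂ :=
    Matrix.of fun i j => (b j : EuclideanSpace ℂ (Fin n)) i
  have hV : ∀ j, toEuclideanLin V (EuclideanSpace.single j 1) = b j := by
    intro j
    ext i
    simp [Matrix.toLpLin_apply, V]
  have hgen : ∀ B : Matrix (Fin n) (Fin n) ℂ, ∀ i j, (Vᴴ * B * V) i j =
      inner ℂ (b i : EuclideanSpace ℂ (Fin n)) (toEuclideanLin B (b j)) := by
    intro B i j
    rw [← hV, ← hV, zdi_inner]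
    simp [Matrix.toLpLin_apply, EuclideanSpace.inner_single_left]
    rfl
  refine ⟨V, ?_, ?_⟩
  · ext i j
    have := hgen 1 i j
    rw [Matrix.mul_one] at this
    rw [this, Matrix.toLpLin_one, LinearMap.id_apply, Matrix.one_apply]
    exact orthonormal_iff_ite.1 b.orthonormal i j
  · ext i j
    rw [hgen]
    exact hS _ (b i).2 _ (b j).2

theorem ker_matRe (A : Matrix (Fin n) (Fin n) ℂ) (c : ℂ) :
    Module.finrank ℂ (LinearMap.ker (matRe (c • A)).mulVecLin) =
      Module.finrank ℂ (LinearMap.ker (rotRe (toEuclideanLin A) c)) := by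
  have h1 : toEuclideanLin (matRe (c • A)) = (2⁻¹ : ℂ) • rotRe (toEuclideanLin A) c := by
    have h0 : (toEuclideanLin Aᴴ) = LinearMap.adjoint (toEuclideanLin A) :=
      Matrix.toEuclideanLin_conjTranspose_eq_adjoint A
    rw [matRe, rotRe, ← h0, Matrix.conjTranspose_smul, map_smul, map_add, map_smul, map_smul]
    rfl
  have h2 : LinearMap.ker (rotRe (toEuclideanLin A) c) =
      LinearMap.ker (toEuclideanLin (matRe (c • A))) := by
    rw [h1, LinearMap.ker_smul _ _ (by norm_num)]
  have h3 : LinearMap.ker (toEuclideanLin (matRe (c • A))) =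
      Submodule.map ((WithLp.linearEquiv 2 ℂ (Fin n → ℂ)).symm : (Fin n → ℂ) →ₗ[ℂ] _)
        (LinearMap.ker (matRe (c • A)).mulVecLin) := by
    ext x
    simp only [Submodule.mem_map_equiv, LinearMap.mem_ker, LinearEquiv.symm_symm,
      Matrix.toLpLin_apply, Matrix.mulVecLin_apply]
    exact WithLp.toLp_eq_zero 2
  rw [h2, h3]
  exact (LinearEquiv.finrank_map_eq (WithLp.linearEquiv 2 ℂ (Fin n → ℂ)).symm _).symm

theorem zdi_core (A : Matrix (Fin n) (Fin n) ℂ) (P : Submodule ℂ (EuclideanSpace ℂ (Fin n)))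
    (hP : ∀ x ∈ P, toEuclideanLin A x ∈ Pᗮ) (hQ : ∀ x ∈ Pᗮ, toEuclideanLin A x ∈ P)
    (hle : Module.finrank ℂ (Pᗮ : Submodule ℂ (EuclideanSpace ℂ (Fin n))) ≤ Module.finrank ℂ P) :
    (n + 1) / 2 ≤ zdi A ∧
    (zdi A = (n + 1) / 2 ↔ ∃ θ₀ : ℝ,
      Module.finrank ℂ
        (LinearMap.ker (matRe (Complex.exp (-(θ₀ : ℂ) * Complex.I) • A)).mulVecLin) ≤ 1) := by
  have hsum := Submodule.finrank_add_finrank_orthogonal P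
  rw [finrank_euclideanSpace_fin] at hsum
  have hPz : Module.finrank ℂ P ≤ zdi A := le_zdi A P (fun x hx y hy =>
    Submodule.inner_right_of_mem_orthogonal hx (hP y hy))
  have h1 : (n + 1) / 2 ≤ zdi A := by omega
  refine ⟨h1, ?_, ?_⟩
  · intro heq
    by_contra! hno
    obtain ⟨M, hM, hMf⟩ := core (toEuclideanLin A) P hP hQ hle (by omega) (by
      intro θ
      rw [← ker_matRe]
      exact hno θ)
    have := le_zdi A M hM
    omega
  · rintro ⟨θ, hθ⟩
    rw [ker_matRe] at hθ
    obtain ⟨S, hS, hSf⟩ := zdi_exists A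
    have := isot_bound _ (Complex.exp (-(θ : ℂ) * Complex.I)) S hS
    rw [finrank_euclideanSpace_fin] at this
    omega

end ZdiMat

/-- Corollary 2.6. -/
theorem zdi_ge_ceil_half_of_unitarily_similar_neg {n : ℕ} (A : Matrix (Fin n) (Fin n) ℂ)
    (h : UnitSim A (-A)) :
    (n + 1) / 2 ≤ zdi A ∧
    (zdi A = (n + 1) / 2 ↔ ∃ θ₀ : ℝ,
      Module.finrank ℂ
        (LinearMap.ker (matRe (Complex.exp (-(θ₀ : ℂ) * Complex.I) • A)).mulVecLin) ≤ 1) := by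
  obtain ⟨U, hU, hUA⟩ := h
  have hUU : Uᴴ * U = 1 := (Matrix.mem_unitaryGroup_iff').1 hU
  have hUU' : U * Uᴴ = 1 := (Matrix.mem_unitaryGroup_iff).1 hU
  have hAU : A * U = -(U * A) := by
    have : U * (Uᴴ * A * U) = U * (-A) := by rw [hUA]
    rw [← Matrix.mul_assoc, ← Matrix.mul_assoc, hUU', Matrix.one_mul, Matrix.mul_neg] at this
    exact this
  obtain ⟨P, hP, hQ⟩ := exists_split (toEuclideanLin A) (toEuclideanLin U) (by
      intro x y
      have := zdi_inner 1 U x y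
      rw [Matrix.mul_one, hUU, Matrix.toLpLin_one] at this
      exact this) (by
      intro x
      rw [← LinearMap.comp_apply, ← LinearMap.comp_apply, ← Matrix.toLpLin_mul,
        ← Matrix.toLpLin_mul, hAU, map_neg, LinearMap.neg_apply])
  rcases le_total (Module.finrank ℂ (Pᗮ : Submodule ℂ (EuclideanSpace ℂ (Fin n))))
    (Module.finrank ℂ P) with hle | hle
  · exact zdi_core A P hP hQ hle
  · have hPP : Pᗮᗮ = P := Submodule.orthogonal_orthogonal P
    exact zdi_core A Pᗮ (by rwa [hPP]) (by rwa [hPP]) (by rwa [hPP])
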